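/- Let F be a field of characteristic 2, let φ, ψ be nondefective quadratic forms over F with dim φ ≥ 2 and dim ψ ≥ 2 such that φ_{F(ψ)} is isotropic. If E/F is a field extension such that both φ_E and ψ_E are anisotropic, then D_E^*(ψ)² ⊆ D_E^*(φ)². -/

import Mathlib

/-!
The products `D_E^*(ψ)²` are contained in `D_E^*(φ)²`: idea of the proof.

Isotropy of `φ` over `F(ψ)` means that there is a vector `f` of polynomials, not all divisible by
the polynomial of `ψ`, such that `ψ ∣ φ(f)`; this survives the passage to `E[X]`
(`dvd_of_map_dvd`).  Take `u`, `v` in `E^κ`, linearly independent, and coordinates on `E^κ` in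
which they are the first two basis vectors.  Then `ψ = a X² + ℓ X + q` over the polynomial ring
`R` in all coordinates but the first, where `a = ψ(u)`.  Reducing `f` modulo `ψ` to
linear polynomials `w₁ X + w₀` and comparing coefficients in `ψ ∣ φ(w₁ X + w₀)` gives
`a φ(w₀) = q φ(w₁)` in `R` (`exists_of_dvd_quadratic`).

Now take leading coefficients for the lexicographic order in which the `v`-coordinate is the
largest variable.  That of `q` is `ψ(v)`, and since `φ_E` is anisotropic, that of `φ(w)` is
`φ(α)` for a nonzero vector `α` over `E` (`exists_leadingCoeff_eval`).  Hence
`ψ(u) φ(α) = ψ(v) φ(β)`, and `ψ(u) ψ(v) = φ(α) · (ψ(u) / φ(β))² φ(β)` is a product of two values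
of `φ`.  For linearly dependent `u`, `v` the product `ψ(u) ψ(v)` is a nonzero square, and every
nonzero square is a product of two values of `φ`.  If the polynomial of `ψ` is not irreducible,
then `φ` is by convention isotropic already over `F`, which contradicts the anisotropy of `φ_E`.
-/

/-!
Background definitions for quadratic forms over fields of characteristic 2,
following the conventions of "Isotropy of quadratic forms over function fields
in characteristic 2".  A quadratic form of dimension `n` over a commutative ring
`R` is represented by a coefficient matrix `c : ι → ι → R` (`ι` a finite index
type), the associated quadratic map being `x ↦ ∑ i j, c i j * x i * x j`; every
quadratic form on a finite-dimensional vector space (a map satisfying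
`φ(av) = a²φ(v)` whose polar form is bilinear) arises this way.
-/

open scoped BigOperators Pointwise Classical

namespace QF2

variable {R S : Type*} [CommRing R] [CommRing S] {ι κ : Type} [Fintype ι] [Fintype κ]

/-- The value at `x` of the quadratic form with coefficient matrix `c`, namely
`∑ i j, c i j * x i * x j`. -/
def eval (c : ι → ι → R) (x : ι → R) : R := ∑ i, ∑ j, c i j * x i * x j

/-- The polar form `b(x,y) = q(x+y) - q(x) - q(y)` of the quadratic form `c`. -/
def polar (c : ι → ι → R) (x y : ι → R) : R := ∑ i, ∑ j, c i j * (x i * y j + x j * y i)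

/-- A quadratic form is isotropic if it vanishes on a nonzero vector. -/
def IsIsotropic (c : ι → ι → R) : Prop := ∃ x : ι → R, x ≠ 0 ∧ eval c x = 0

/-- Anisotropic: not isotropic. -/
abbrev IsAnisotropic (c : ι → ι → R) : Prop := ¬ IsIsotropic c

/-- Base change of a quadratic form along a ring homomorphism. -/
def map (σ : R →+* S) (c : ι → ι → R) : ι → ι → S := fun i j => σ (c i j)

/-- Quasilinear (totally singular): the polar form vanishes identically. -/
def IsQuasilinear (c : ι → ι → R) : Prop := ∀ x y : ι → R, polar c x y = 0

/-- Nondefective (quasilinear index `i_d = 0`): no nonzero vector of the radical of the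
polar form is isotropic. -/
def IsNondefective (c : ι → ι → R) : Prop :=
  ∀ x : ι → R, (∀ y, polar c x y = 0) → eval c x = 0 → x = 0

/-- `d` is isometric to `c`. -/
def Isometric (c : ι → ι → R) (d : κ → κ → R) : Prop :=
  ∃ g : (κ → R) ≃ₗ[R] (ι → R), ∀ x, eval d x = eval c (g x)

/-- `D_R^*(c)`: the set of nonzero represented elements. -/
def reps (c : ι → ι → R) : Set R := {a | a ≠ 0 ∧ ∃ x : ι → R, eval c x = a}

/-- `D_R^*(c)^m`: products of `m` nonzero represented elements. -/
def repsPow (c : ι → ι → R) (m : ℕ) : Set R :=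
  {a | ∃ v : Fin m → R, (∀ k, v k ∈ reps c) ∧ a = ∏ k, v k}

/-- The multiplicative subgroup of `F^*` generated by a set `s` of nonzero elements,
realized as a subset of `F` (products of elements of `s` and their inverses). -/
def genBy {F : Type*} [Field F] (s : Set F) : Set F :=
  ↑(Submonoid.closure (s ∪ Inv.inv '' s))

/-- `⟨D_F^*(c)⟩`: the subgroup generated by the nonzero represented elements. -/
def genGroup {F : Type*} [Field F] (c : ι → ι → F) : Set F := genBy (reps c)

/-- `⟨D_F^*(c)²⟩`. -/
def genGroup2 {F : Type*} [Field F] (c : ι → ι → F) : Set F := genBy (repsPow c 2)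

/-- The scaled quadratic form `a·c`. -/
def smulQF (a : R) (c : ι → ι → R) : ι → ι → R := fun i j => a * c i j

/-- Orthogonal sum of two quadratic forms. -/
def orthSum (c : ι → ι → R) (d : κ → κ → R) : (ι ⊕ κ) → (ι ⊕ κ) → R
  | Sum.inl i, Sum.inl j => c i j
  | Sum.inr i, Sum.inr j => d i j
  | _, _ => 0

lemma eval_add (c : ι → ι → R) (x y : ι → R) :
    eval c (x + y) = eval c x + eval c y + polar c x y := by
  unfold eval polar
  rw [← Finset.sum_add_distrib, ← Finset.sum_add_distrib]
  refine Finset.sum_congr rfl fun i _ => ?_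
  rw [← Finset.sum_add_distrib, ← Finset.sum_add_distrib]
  refine Finset.sum_congr rfl fun j _ => ?_
  simp only [Pi.add_apply]; ring

lemma polar_add_left (c : ι → ι → R) (x x' y : ι → R) :
    polar c (x + x') y = polar c x y + polar c x' y := by
  unfold polar
  rw [← Finset.sum_add_distrib]
  refine Finset.sum_congr rfl fun i _ => ?_
  rw [← Finset.sum_add_distrib]
  refine Finset.sum_congr rfl fun j _ => ?_
  simp only [Pi.add_apply]; ring

lemma polar_smul_left (c : ι → ι → R) (a : R) (x y : ι → R) :
    polar c (a • x) y = a * polar c x y := by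
  unfold polar
  rw [Finset.mul_sum]
  refine Finset.sum_congr rfl fun i _ => ?_
  rw [Finset.mul_sum]
  refine Finset.sum_congr rfl fun j _ => ?_
  simp only [Pi.smul_apply, smul_eq_mul]; ring

lemma eval_smul (c : ι → ι → R) (a : R) (x : ι → R) :
    eval c (a • x) = a ^ 2 * eval c x := by
  unfold eval
  rw [Finset.mul_sum]
  refine Finset.sum_congr rfl fun i _ => ?_
  rw [Finset.mul_sum]
  refine Finset.sum_congr rfl fun j _ => ?_
  simp only [Pi.smul_apply, smul_eq_mul]; ring

/-- The defect of a quadratic form: the submodule of isotropic vectors lying in the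
radical of the polar form. -/
def defectSubmodule (c : ι → ι → R) : Submodule R (ι → R) where
  carrier := {x | (∀ y, polar c x y = 0) ∧ eval c x = 0}
  zero_mem' := by
    constructor
    · intro y; unfold polar; simp
    · unfold eval; simp
  add_mem' := by
    rintro x x' ⟨hx1, hx2⟩ ⟨hx1', hx2'⟩
    refine ⟨fun y => ?_, ?_⟩
    · rw [polar_add_left, hx1 y, hx1' y, add_zero]
    · rw [eval_add, hx2, hx2', hx1 x', add_zero, add_zero]
  smul_mem' := by
    rintro a x ⟨hx1, hx2⟩
    refine ⟨fun y => ?_, ?_⟩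
    · rw [polar_smul_left, hx1 y, mul_zero]
    · rw [eval_smul, hx2, mul_zero]

/-- The quasilinear index (defect) `i_d` of a quadratic form. -/
noncomputable def defectIndex (c : ι → ι → R) : ℕ :=
  Module.finrank R (defectSubmodule c)

/-- The total isotropy index `i_t`: the dimension of a maximal totally isotropic
subspace. -/
noncomputable def totalIndex (c : ι → ι → R) : ℕ :=
  sSup {m | ∃ W : Submodule R (ι → R), (∀ x ∈ W, eval c x = 0) ∧ Module.finrank R W = m}

/-- The Witt index `i_W = i_t - i_d`. -/
noncomputable def wittIndex (c : ι → ι → R) : ℕ := totalIndex c - defectIndex c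

variable {F : Type u} [Field F]

/-- The homogeneous quadratic polynomial `φ(X_1, …, X_n)` attached to a quadratic form. -/
noncomputable def poly (c : ι → ι → F) : MvPolynomial ι F :=
  ∑ i, ∑ j, MvPolynomial.C (c i j) * (MvPolynomial.X i * MvPolynomial.X j)

/-- The canonical map from `F` to the total fraction ring of `A/(f)`; when `f` is
irreducible, the target is the function field `F(f)`. -/
noncomputable def ffHom {A : Type*} [CommRing A] (σ : F →+* A) (f : A) :
    F →+* FractionRing (A ⧸ Ideal.span {f}) :=
  (algebraMap (A ⧸ Ideal.span {f}) (FractionRing (A ⧸ Ideal.span {f}))).comp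
    ((Ideal.Quotient.mk (Ideal.span {f})).comp σ)

/-- The canonical map from `R` into (the total fraction ring of) `R[X_i : i ∈ κ]`;
for a field this is the inclusion into the rational function field `F(X_i : i ∈ κ)`. -/
noncomputable def ratHom (κ : Type) (R : Type*) [CommRing R] :
    R →+* FractionRing (MvPolynomial κ R) :=
  (algebraMap (MvPolynomial κ R) (FractionRing (MvPolynomial κ R))).comp MvPolynomial.C

/-- The canonical map from `F` into the rational function field `F(X)`. -/
noncomputable def ratHom1 (F : Type u) [Field F] : F →+* FractionRing (Polynomial F) :=
  (algebraMap (Polynomial F) (FractionRing (Polynomial F))).comp Polynomial.C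

/-- `φ_{F(ψ)}` is isotropic, where `F(ψ)` is the function field of the quadratic form `ψ`.
When the polynomial of `ψ` is irreducible this is the quotient field of `F[X]/(ψ(X))`;
otherwise (`ψ ≅ ⟨a⟩`, `ψ ≅ ℍ`, or degenerate defective cases) `F(ψ)` is a purely
transcendental extension of `F`, over which isotropy is equivalent to isotropy over `F`. -/
def IsotropicOverFunField (c : ι → ι → F) (d : κ → κ → F) : Prop :=
  (Irreducible (poly d) → IsIsotropic (map (ffHom MvPolynomial.C (poly d)) c)) ∧
  (¬ Irreducible (poly d) → IsIsotropic c)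

/-- Stable birational equivalence of (nondefective) quadratic forms:
`φ_{F(ψ)}` and `ψ_{F(φ)}` are both isotropic. -/
def StbEquiv (c : ι → ι → F) (d : κ → κ → F) : Prop :=
  IsotropicOverFunField c d ∧ IsotropicOverFunField d c

/-- The leading coefficient of a multivariate polynomial with respect to the
lexicographic ordering on monomials. -/
noncomputable def lexLC {l : ℕ} {F : Type*} [CommSemiring F] (f : MvPolynomial (Fin l) F) : F :=
  if h : f = 0 then 0
  else f.coeff (ofLex ((f.support.image (toLex : (Fin l →₀ ℕ) → Lex (Fin l →₀ ℕ))).max'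
    (Finset.Nonempty.image (MvPolynomial.support_nonempty.mpr h) _)))

/-- The coefficient matrix of the tensor product `π ⊗ φ` of the bilinear Pfister form
`π = ⟨⟨a 1, …, a n⟩⟩_b` with the quadratic form `c` (with respect to the standard basis,
`π ⊗ φ ≅ ⊥_{S ⊆ {1,…,n}} (∏_{i ∈ S} a i) φ`). -/
def pfisterMul {n : ℕ} (a : Fin n → R) (c : ι → ι → R) :
    ((Fin n → Bool) × ι) → ((Fin n → Bool) × ι) → R :=
  fun p q =>
    if p.1 = q.1 then (∏ i, if p.1 i then a i else 1) * c p.2 q.2 else 0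


/-! ### Isotropy over the function field as a divisibility statement -/

lemma eval_map_comp (τ : R →+* S) (c : ι → ι → R) (x : ι → R) :
    eval (map τ c) (fun i => τ (x i)) = τ (eval c x) := by
  simp [eval, map]

lemma map_map {T : Type*} [CommRing T] (τ : R →+* S) (ρ : S →+* T) (c : ι → ι → R) :
    map ρ (map τ c) = map (ρ.comp τ) c := rfl

lemma poly_eq_eval (d : κ → κ → F) :
    poly d = eval (map MvPolynomial.C d) MvPolynomial.X := by
  simp [poly, eval, map, mul_assoc]

/-- Congruent vectors have congruent values. -/
lemma dvd_eval_of_dvd_sub (c : ι → ι → R) (P : R) (f r : ι → R) (h : ∀ i, P ∣ f i - r i)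
    (hf : P ∣ eval c f) : P ∣ eval c r := by
  have h' : ∀ i, Ideal.Quotient.mk (Ideal.span {P}) (f i)
      = Ideal.Quotient.mk (Ideal.span {P}) (r i) := fun i => by
    rw [Ideal.Quotient.eq, Ideal.mem_span_singleton]; exact h i
  rw [← Ideal.mem_span_singleton, ← Ideal.Quotient.eq_zero_iff_mem] at hf ⊢
  rw [← eval_map_comp] at hf ⊢
  simpa [h'] using hf

/-- Clearing denominators in the total ring of fractions of `F[X]/(P)`, isotropy over that
ring becomes a divisibility statement about polynomials. -/
lemma exists_dvd_of_isotropic (c : ι → ι → F) (P : MvPolynomial κ F)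
    (h : IsIsotropic (map (ffHom MvPolynomial.C P) c)) :
    ∃ f : ι → MvPolynomial κ F, P ∣ eval (map MvPolynomial.C c) f ∧ ∃ i, ¬ P ∣ f i := by
  obtain ⟨x, hx0, hx⟩ := h
  obtain ⟨s, hs⟩ := IsLocalization.exist_integer_multiples_of_finite
    (nonZeroDivisors (MvPolynomial κ F ⧸ Ideal.span {P})) x
  choose g hg using hs
  choose f hf using fun i => Ideal.Quotient.mk_surjective (g i)
  have hinj := IsFractionRing.injective (MvPolynomial κ F ⧸ Ideal.span {P})
    (FractionRing (MvPolynomial κ F ⧸ Ideal.span {P}))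
  refine ⟨f, ?_, ?_⟩
  · rw [← Ideal.mem_span_singleton, ← Ideal.Quotient.eq_zero_iff_mem, ← eval_map_comp]
    apply hinj
    rw [map_zero, ← eval_map_comp]
    have : (fun i => algebraMap (MvPolynomial κ F ⧸ Ideal.span {P})
        (FractionRing (MvPolynomial κ F ⧸ Ideal.span {P}))
          (Ideal.Quotient.mk (Ideal.span {P}) (f i)))
        = algebraMap _ (FractionRing (MvPolynomial κ F ⧸ Ideal.span {P})) s.1 • x := by
      funext i
      rw [hf, hg, Algebra.smul_def]; rfl
    rw [this, eval_smul]
    simp only [map_map]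
    erw [hx]
    simp
  · by_contra! hall
    apply hx0
    funext i
    have hgi : g i = 0 := by
      rw [← hf, Ideal.Quotient.eq_zero_iff_mem, Ideal.mem_span_singleton]; exact hall i
    have h1 := hg i
    rw [hgi, map_zero, Algebra.smul_def] at h1
    exact (IsLocalization.map_units _ s).mul_right_eq_zero.mp h1.symm

/-- Divisibility of polynomials descends along field extensions: apply an `F`-linear retraction
`E → F` to the coefficients of the quotient. -/
lemma dvd_of_map_dvd {E : Type*} [Field E] (σ : F →+* E) {p q : MvPolynomial κ F}
    (h : MvPolynomial.map σ p ∣ MvPolynomial.map σ q) : p ∣ q := by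
  let := σ.toAlgebra
  obtain ⟨g, hg⟩ := h
  obtain ⟨s, hs⟩ := (Algebra.linearMap F E).exists_leftInverse_of_injective
    (LinearMap.ker_eq_bot.mpr σ.injective)
  have hs1 : ∀ a : F, s (σ a) = a := fun a => LinearMap.congr_fun hs a
  have hs2 : ∀ (a : F) (e : E), s (σ a * e) = a * s e := fun a e => by
    rw [← smul_eq_mul a, ← map_smul, Algebra.smul_def]; rfl
  refine ⟨∑ l ∈ g.support, MvPolynomial.monomial l (s (g.coeff l)), ?_⟩
  have hco : ∀ l, (∑ l ∈ g.support, MvPolynomial.monomial l (s (g.coeff l))).coeff l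
      = s (g.coeff l) := by
    intro l
    simp only [MvPolynomial.coeff_sum, MvPolynomial.coeff_monomial, Finset.sum_ite_eq']
    split_ifs with hl
    · rfl
    · rw [MvPolynomial.notMem_support_iff.mp hl, map_zero]
  ext m
  rw [MvPolynomial.coeff_mul, ← hs1 (q.coeff m), ← MvPolynomial.coeff_map, hg,
    MvPolynomial.coeff_mul, map_sum]
  simp only [MvPolynomial.coeff_map, hs2, hco]

/-! ### Leading coefficients of values of anisotropic forms -/

section LeadingCoeff

variable {E τ : Type*} [Field E] (m : MonomialOrder τ)

/-- If all entries of a polynomial vector `w` have degree at most `a`, then `c(w)` has degree at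
most `2a`, and its coefficient there is the value of `c` at the vector of `a`-th coefficients. -/
lemma coeff_eval (c : ι → ι → E) (w : ι → MvPolynomial τ E) (a : τ →₀ ℕ)
    (hw : ∀ i, m.toSyn (m.degree (w i)) ≤ m.toSyn a) :
    m.toSyn (m.degree (eval (map MvPolynomial.C c) w)) ≤ m.toSyn (a + a) ∧
    (eval (map MvPolynomial.C c) w).coeff (a + a) = eval c (fun i => (w i).coeff a) := by
  constructor
  · unfold eval map
    refine m.degree_sum_le.trans (Finset.sup_le fun i _ => ?_)
    refine m.degree_sum_le.trans (Finset.sup_le fun j _ => ?_)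
    rw [mul_assoc, ← MvPolynomial.smul_eq_C_mul]
    refine m.degree_smul_le.trans (m.degree_mul_le.trans ?_)
    rw [map_add, map_add]
    exact add_le_add (hw i) (hw j)
  · unfold eval map
    simp only [MvPolynomial.coeff_sum, mul_assoc, MvPolynomial.coeff_C_mul,
      m.coeff_mul_of_add_of_degree_le (hw _) (hw _)]

lemma leadingCoeff_eval (c : ι → ι → E) (hc : IsAnisotropic c) (w : ι → MvPolynomial τ E)
    (a : τ →₀ ℕ) (hw : ∀ i, m.toSyn (m.degree (w i)) ≤ m.toSyn a)
    (hne : (fun i => (w i).coeff a) ≠ 0) :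
    m.leadingCoeff (eval (map MvPolynomial.C c) w) = eval c (fun i => (w i).coeff a) := by
  obtain ⟨h1, h2⟩ := coeff_eval m c w a hw
  have h3 : (eval (map MvPolynomial.C c) w).coeff (a + a) ≠ 0 := fun h =>
    hc ⟨_, hne, h2 ▸ h⟩
  have h4 : m.degree (eval (map MvPolynomial.C c) w) = a + a :=
    m.toSyn.injective (le_antisymm h1 (m.le_degree (MvPolynomial.mem_support_iff.mpr h3)))
  rw [MonomialOrder.leadingCoeff, h4, h2]

/-- The leading coefficient of a value of an anisotropic form at a nonzero polynomial vector is
again a value of the form. -/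
lemma exists_leadingCoeff_eval (c : ι → ι → E) (hc : IsAnisotropic c)
    (w : ι → MvPolynomial τ E) (hw : w ≠ 0) :
    ∃ α : ι → E, α ≠ 0 ∧ m.leadingCoeff (eval (map MvPolynomial.C c) w) = eval c α := by
  obtain ⟨i0, hi0⟩ := Function.ne_iff.mp hw
  have hmem : (Finset.univ.filter fun i => w i ≠ 0).Nonempty :=
    ⟨i0, by simpa using hi0⟩
  obtain ⟨k, hk, hmax⟩ := Finset.exists_max_image _ (fun i => m.toSyn (m.degree (w i))) hmem
  have hk : w k ≠ 0 := by simpa using hk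
  have hne : (fun i => (w i).coeff (m.degree (w k))) ≠ 0 := fun h =>
    m.coeff_degree_ne_zero_iff.mpr hk (congrFun h k)
  refine ⟨_, hne, leadingCoeff_eval m c hc w _ (fun i => ?_) hne⟩
  by_cases hi : w i = 0
  · simp [hi]
  · exact hmax i (by simpa using hi)

end LeadingCoeff

/-! ### Coordinates adapted to two vectors -/

lemma exists_basis {E : Type*} [Field E] (u v : κ → E) (h : LinearIndependent E ![u, v]) :
    ∃ (n : ℕ) (b : Module.Basis (Fin (n + 1 + 1)) E (κ → E)), b 0 = u ∧ b (Fin.succ 0) = v := by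
  let B := Module.Basis.sumExtend h
  have : Finite (Fin 2 ⊕ Module.Basis.sumExtendIndex h) := Module.Finite.finite_basis B
  have : Finite (Module.Basis.sumExtendIndex h) := Finite.sum_right (Fin 2)
  obtain ⟨n, ⟨e⟩⟩ := Finite.exists_equiv_fin (Module.Basis.sumExtendIndex h)
  have hB : ∀ k, B (Sum.inl k) = ![u, v] k := fun k => by
    simp only [B, Module.Basis.sumExtend, Module.Basis.reindex_apply, Module.Basis.coe_extend]
    rfl
  let e' : Fin 2 ⊕ Module.Basis.sumExtendIndex h ≃ Fin (n + 1 + 1) :=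
    (Equiv.sumCongr (Equiv.refl _) e).trans
      (finSumFinEquiv.trans (finCongr (by omega : 2 + n = n + 1 + 1)))
  have h0 : e' (Sum.inl 0) = 0 := by ext; simp [e']
  have h1 : e' (Sum.inl 1) = Fin.succ 0 := by ext; simp [e']
  refine ⟨n, B.reindex e', ?_, ?_⟩
  · rw [Module.Basis.reindex_apply, ← h0, Equiv.symm_apply_apply, hB]; rfl
  · rw [Module.Basis.reindex_apply, ← h1, Equiv.symm_apply_apply, hB]; rfl

/-- The substitution `X_k ↦ ∑ j, (b j)_k Y_j` attached to a basis `b` reflects divisibility,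
having a left inverse. -/
lemma dvd_of_subst_dvd {E ν : Type*} [Field E] [Fintype ν] (b : Module.Basis ν E (κ → E))
    {p q : MvPolynomial κ E}
    (h : MvPolynomial.aeval (fun k => ∑ j, MvPolynomial.C (b j k) * MvPolynomial.X j) p ∣
      (MvPolynomial.aeval (fun k => ∑ j, MvPolynomial.C (b j k) * MvPolynomial.X j) q :
        MvPolynomial ν E)) : p ∣ q := by
  let L : MvPolynomial ν E →ₐ[E] MvPolynomial κ E := MvPolynomial.aeval
    (fun j => ∑ l, MvPolynomial.C (b.repr (Pi.single l 1) j) * MvPolynomial.X l)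
  have hL : L.comp (MvPolynomial.aeval
      (fun k => ∑ j, MvPolynomial.C (b j k) * MvPolynomial.X j)) = AlgHom.id E _ := by
    apply MvPolynomial.algHom_ext
    intro k
    have hk : ∀ l, ∑ j, b.repr (Pi.single l 1) j * b j k = (Pi.single l 1 : κ → E) k := by
      intro l
      have := congrFun (b.sum_repr (Pi.single l 1)) k
      simpa using this
    simp only [AlgHom.comp_apply, MvPolynomial.aeval_X, map_sum, map_mul,
      AlgHom.id_apply, L, MvPolynomial.aeval_C, MvPolynomial.algebraMap_eq]
    simp only [Finset.mul_sum]
    rw [Finset.sum_comm]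
    have : ∀ l, ∑ j, MvPolynomial.C (b j k) *
        (MvPolynomial.C (b.repr (Pi.single l 1) j) * MvPolynomial.X l)
        = MvPolynomial.C ((Pi.single l 1 : κ → E) k) * MvPolynomial.X l := by
      intro l
      rw [← hk l, map_sum, Finset.sum_mul]
      refine Finset.sum_congr rfl fun j _ => ?_
      rw [map_mul]; ring
    simp only [this]
    rw [Finset.sum_eq_single k]
    · simp
    · intro l _ hl; simp [hl.symm]
    · simp
  have := map_dvd L h
  have hid : ∀ r, L (MvPolynomial.aeval
      (fun k => ∑ j, MvPolynomial.C (b j k) * MvPolynomial.X j) r) = r := fun r => by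
    simpa using AlgHom.congr_fun hL r
  simpa only [hid] using this

/-! ### The relation between values of the two forms -/

/-- Isotropy modulo a quadratic polynomial with unit leading coefficient `a`, made explicit:
reduce the coordinates to linear polynomials `w₁ X + w₀` and compare coefficients. -/
lemma exists_of_dvd_quadratic {A : Type*} [CommRing A] [IsDomain A] (c : ι → ι → A) (a ℓ q : A)
    (ha : IsUnit a) (f : ι → Polynomial A)
    (hf : Polynomial.C a * Polynomial.X ^ 2 + Polynomial.C ℓ * Polynomial.X + Polynomial.C q ∣
      eval (map Polynomial.C c) f)
    (hne : ∃ i, ¬ Polynomial.C a * Polynomial.X ^ 2 + Polynomial.C ℓ * Polynomial.X +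
      Polynomial.C q ∣ f i) :
    ∃ w₀ w₁ : ι → A, (w₀ ≠ 0 ∨ w₁ ≠ 0) ∧ a * eval c w₀ = q * eval c w₁ := by
  obtain ⟨b, hab⟩ := ha.exists_right_inv
  set P := Polynomial.C a * Polynomial.X ^ 2 + Polynomial.C ℓ * Polynomial.X + Polynomial.C q
    with hP
  have hba : b * a = 1 := by rw [mul_comm]; exact hab
  set Q : Polynomial A := Polynomial.X ^ 2 + (Polynomial.C (b * ℓ) * Polynomial.X
    + Polynomial.C (b * q)) with hQ
  have hQP : Q = Polynomial.C b * P := by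
    have : (Polynomial.C b * Polynomial.C a : Polynomial A) = 1 := by
      rw [← map_mul, hba, map_one]
    rw [hQ, hP, map_mul, map_mul]
    linear_combination (-Polynomial.X ^ 2) * this
  have hdvd : ∀ g, P ∣ g ↔ Q ∣ g := by
    intro g
    have hu : IsUnit (Polynomial.C b) := Polynomial.isUnit_C.mpr (IsUnit.of_mul_eq_one a hba)
    rw [hQP]; exact (hu.mul_left_dvd).symm
  have hlow : (Polynomial.C (b * ℓ) * Polynomial.X + Polynomial.C (b * q)).degree < ((2 : ℕ) : WithBot ℕ) :=
    lt_of_le_of_lt Polynomial.degree_linear_le (by norm_num)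
  have hQm : Q.Monic := Polynomial.monic_X_pow_add hlow
  have hQd : Q.degree = ((2 : ℕ) : WithBot ℕ) := by
    rw [hQ, Polynomial.degree_add_eq_left_of_degree_lt] <;> rw [Polynomial.degree_X_pow]
    exact hlow
  set r : ι → Polynomial A := fun i => f i %ₘ Q with hr
  have hrdeg : ∀ i, (r i).degree ≤ (1 : ℕ) := fun i => by
    have := Polynomial.degree_modByMonic_lt (f i) hQm
    rw [hQd] at this
    exact Polynomial.degree_le_of_natDegree_le (by
      by_cases h0 : f i %ₘ Q = 0
      · simp [hr, h0]
      · exact Nat.lt_succ_iff.mp ((Polynomial.natDegree_lt_iff_degree_lt h0).mpr this))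
  let w₀ : ι → A := fun i => (r i).coeff 0
  let w₁ : ι → A := fun i => (r i).coeff 1
  have hrw : r = (Polynomial.X : Polynomial A) • (fun i => Polynomial.C (w₁ i)) + fun i => Polynomial.C (w₀ i) := by
    funext i
    have := Polynomial.eq_X_add_C_of_degree_le_one (hrdeg i)
    rw [this]; simp [w₀, w₁]
  have hdr : Q ∣ eval (map Polynomial.C c) r := by
    refine dvd_eval_of_dvd_sub _ Q f r (fun i => ?_) ((hdvd _).mp hf)
    exact ⟨f i /ₘ Q, by rw [hr]; linear_combination -(Polynomial.modByMonic_add_div (f i) Q)⟩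
  have hpol : polar (map Polynomial.C c) (fun i => Polynomial.C (w₁ i))
      (fun i => Polynomial.C (w₀ i)) = Polynomial.C (polar c w₁ w₀) := by
    simp [polar, map]
  have hev : eval (map Polynomial.C c) r = Polynomial.C (eval c w₁) * Polynomial.X ^ 2 +
      Polynomial.C (polar c w₁ w₀) * Polynomial.X + Polynomial.C (eval c w₀) := by
    rw [hrw, eval_add, eval_smul, polar_smul_left, hpol, eval_map_comp, eval_map_comp]
    ring
  refine ⟨w₀, w₁, ?_, ?_⟩
  · by_contra! hcon
    obtain ⟨i, hi⟩ := hne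
    apply hi
    rw [hdvd, ← Polynomial.modByMonic_eq_zero_iff_dvd hQm]
    have := congrFun hrw i
    rw [show f i %ₘ Q = r i from rfl, this]
    simp [hcon.1, hcon.2]
  · have hQ' : Q ∣ eval (map Polynomial.C c) r - Polynomial.C (eval c w₁) * Q :=
      dvd_sub hdr (dvd_mul_left _ _)
    have hsub : eval (map Polynomial.C c) r - Polynomial.C (eval c w₁) * Q =
        Polynomial.C (polar c w₁ w₀ - eval c w₁ * (b * ℓ)) * Polynomial.X +
          Polynomial.C (eval c w₀ - eval c w₁ * (b * q)) := by
      rw [hev, hQ]; simp only [map_sub, map_mul]; ring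
    have hz := Polynomial.eq_zero_of_dvd_of_degree_lt hQ' (by
      rw [hsub, hQd]
      exact lt_of_le_of_lt Polynomial.degree_linear_le (by norm_num))
    rw [hsub] at hz
    have h0 := congrArg (fun p => Polynomial.coeff p 0) hz
    simp only [Polynomial.coeff_add, Polynomial.coeff_C_mul, Polynomial.coeff_X_zero,
      Polynomial.coeff_C_zero, mul_zero, zero_add, Polynomial.coeff_zero] at h0
    linear_combination a * h0 + eval c w₁ * q * hab

/-- The heart of the argument.  In coordinates starting with `u`, `v`, the form `d` becomes
`d(u) X² + ℓ X + q`, where `q` is the restriction of `d` to the span of the remaining basis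
vectors and has leading coefficient `d(v)`. -/
lemma exists_of_linearIndependent {E : Type*} [Field E] (c : ι → ι → E) (d : κ → κ → E)
    (hc : IsAnisotropic c) (hd : IsAnisotropic d) (f : ι → MvPolynomial κ E)
    (hf : poly d ∣ eval (map MvPolynomial.C c) f) (hne : ∃ i, ¬ poly d ∣ f i)
    (u v : κ → E) (huv : LinearIndependent E ![u, v]) :
    ∃ α β : ι → E, α ≠ 0 ∧ β ≠ 0 ∧ eval d u * eval c α = eval d v * eval c β := by
  obtain ⟨n, b, rfl, rfl⟩ := exists_basis u v huv
  let Φ : MvPolynomial κ E →ₐ[E] Polynomial (MvPolynomial (Fin (n + 1)) E) :=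
    (MvPolynomial.finSuccEquiv E (n + 1)).toAlgHom.comp (MvPolynomial.aeval
      (fun k => ∑ j, MvPolynomial.C (b j k) * MvPolynomial.X j))
  have hΦ : ∀ p, Φ p = MvPolynomial.finSuccEquiv E (n + 1) (MvPolynomial.aeval
      (fun k => ∑ j, MvPolynomial.C (b j k) * MvPolynomial.X j) p) := fun _ => rfl
  have hΦdvd : ∀ p q, Φ p ∣ Φ q → p ∣ q := fun p q h =>
    dvd_of_subst_dvd b ((map_dvd_iff (MvPolynomial.finSuccEquiv E (n + 1))).mp h)
  have hΦC : ∀ e : E, Φ (MvPolynomial.C e) = Polynomial.C (MvPolynomial.C e) := fun e => by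
    rw [← MvPolynomial.algebraMap_eq, AlgHom.commutes]; rfl
  let y : κ → MvPolynomial (Fin (n + 1)) E :=
    fun k => ∑ j : Fin (n + 1), MvPolynomial.C (b j.succ k) * MvPolynomial.X j
  let u' : κ → MvPolynomial (Fin (n + 1)) E := fun k => MvPolynomial.C (b 0 k)
  have hΦX : (fun k => Φ (MvPolynomial.X k)) =
      (Polynomial.X : Polynomial (MvPolynomial (Fin (n + 1)) E)) •
        (fun k => Polynomial.C (u' k)) + fun k => Polynomial.C (y k) := by
    funext k
    have hC : ∀ e : E, MvPolynomial.finSuccEquiv E (n + 1) (MvPolynomial.C e)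
        = Polynomial.C (MvPolynomial.C e) := fun e => by
      rw [← MvPolynomial.algebraMap_eq, AlgEquiv.commutes]; rfl
    rw [hΦ]
    simp only [MvPolynomial.aeval_X, map_add, map_sum, map_mul, Fin.sum_univ_succ (n := n + 1),
      MvPolynomial.finSuccEquiv_X_zero, MvPolynomial.finSuccEquiv_X_succ, hC,
      Pi.add_apply, Pi.smul_apply, smul_eq_mul, u', y]
    ring
  have hmap : ∀ {μ : Type} [Fintype μ] (g : μ → μ → E),
      map (Φ : MvPolynomial κ E →+* Polynomial (MvPolynomial (Fin (n + 1)) E)) (map MvPolynomial.C g)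
        = map Polynomial.C (map MvPolynomial.C g) := by
    intro μ _ g
    funext i j
    exact hΦC _
  have hΦeval : ∀ {μ : Type} [Fintype μ] (g : μ → μ → E) (x : μ → MvPolynomial κ E),
      Φ (eval (map MvPolynomial.C g) x) =
        eval (map Polynomial.C (map MvPolynomial.C g)) (fun i => Φ (x i)) := by
    intro μ _ g x
    rw [← hmap]
    exact (eval_map_comp (Φ : MvPolynomial κ E →+* Polynomial (MvPolynomial (Fin (n + 1)) E)) _ x).symm
  set D := map (MvPolynomial.C (σ := Fin (n + 1))) d with hD
  have hpoly : Φ (poly d) = Polynomial.C (MvPolynomial.C (eval d (b 0))) * Polynomial.X ^ 2 +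
      Polynomial.C (polar D u' y) * Polynomial.X + Polynomial.C (eval D y) := by
    have hpol : polar (map Polynomial.C D) (fun k => Polynomial.C (u' k))
        (fun k => Polynomial.C (y k)) = Polynomial.C (polar D u' y) := by
      simp [polar, map]
    have hu' : eval D u' = MvPolynomial.C (eval d (b 0)) := eval_map_comp _ _ _
    rw [poly_eq_eval, hΦeval, ← hD, hΦX, eval_add, eval_smul, polar_smul_left, hpol,
      eval_map_comp Polynomial.C D u', eval_map_comp Polynomial.C D y, hu']
    ring
  have hu0 : eval d (b 0) ≠ 0 := fun h => hd ⟨_, b.ne_zero 0, h⟩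
  obtain ⟨w₀, w₁, hw, heq⟩ := exists_of_dvd_quadratic (map MvPolynomial.C c)
    (MvPolynomial.C (eval d (b 0))) (polar D u' y) (eval D y)
    ((isUnit_iff_ne_zero.mpr hu0).map _) (fun i => Φ (f i))
    (by rw [← hpoly, ← hΦeval]; exact map_dvd Φ hf)
    (by
      obtain ⟨i, hi⟩ := hne
      exact ⟨i, fun h => hi (hΦdvd _ _ (by rw [hpoly]; exact h))⟩)
  let m : MonomialOrder (Fin (n + 1)) := MonomialOrder.lex
  have hzero : ∀ w : ι → MvPolynomial (Fin (n + 1)) E,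
      eval (map MvPolynomial.C c) w = 0 → w = 0 := by
    intro w h
    by_contra hw
    obtain ⟨α, hα, h'⟩ := exists_leadingCoeff_eval m c hc w hw
    rw [h, m.leadingCoeff_zero] at h'
    exact hc ⟨α, hα, h'.symm⟩
  -- In the lexicographic order on `Fin (n + 1)` the variable `X 0` is the largest one.
  have hlex : ∀ k, m.toSyn (m.degree (y k)) ≤ m.toSyn (Finsupp.single 0 1) := by
    intro k
    refine m.degree_sum_le.trans (Finset.sup_le fun j _ => ?_)
    rw [← MvPolynomial.smul_eq_C_mul]
    refine m.degree_smul_le.trans (m.degree_X_le_single.trans ?_)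
    exact Finsupp.Lex.single_strictAnti.antitone (Fin.zero_le j)
  have hycoeff : (fun k => (y k).coeff (Finsupp.single 0 1)) = b (Fin.succ 0) := by
    funext k
    simp only [y, MvPolynomial.coeff_sum, MvPolynomial.coeff_C_mul, MvPolynomial.coeff_X]
    rw [Finset.sum_eq_single 0]
    · simp
    · intro j _ hj
      simp [Finsupp.single_left_inj, hj]
    · simp
  have hq : m.leadingCoeff (eval D y) = eval d (b (Fin.succ 0)) := by
    have := leadingCoeff_eval m d hd y (Finsupp.single 0 1) hlex (by
      rw [hycoeff]; exact b.ne_zero _)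
    rw [hycoeff] at this
    exact this
  have hq0 : eval D y ≠ 0 := by
    rw [← m.leadingCoeff_ne_zero_iff, hq]
    exact fun h => hd ⟨_, b.ne_zero _, h⟩
  have hw₀ : w₀ ≠ 0 := by
    intro h
    have h1 : eval (map MvPolynomial.C c) w₁ = 0 := by
      rw [h, show eval (map MvPolynomial.C c) (0 : ι → MvPolynomial (Fin (n + 1)) E) = 0 by
        simp [eval], mul_zero] at heq
      exact (mul_eq_zero.mp heq.symm).resolve_left hq0
    exact hw.elim (fun h' => h' h) (fun h' => h' (hzero _ h1))
  have hw₁ : w₁ ≠ 0 := by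
    intro h
    apply hw₀
    apply hzero
    rw [h, show eval (map MvPolynomial.C c) (0 : ι → MvPolynomial (Fin (n + 1)) E) = 0 by
        simp [eval], mul_zero] at heq
    exact (mul_eq_zero.mp heq).resolve_left (by simpa using hu0)
  obtain ⟨α, hα, hα'⟩ := exists_leadingCoeff_eval m c hc w₀ hw₀
  obtain ⟨β, hβ, hβ'⟩ := exists_leadingCoeff_eval m c hc w₁ hw₁
  refine ⟨α, β, hα, hβ, ?_⟩
  have := congrArg m.leadingCoeff heq
  rwa [m.leadingCoeff_mul, m.leadingCoeff_mul, m.leadingCoeff_C, hq, hα', hβ'] at this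

lemma mul_mem_repsPow {E : Type*} [Field E] (c : ι → ι → E) {a b : E} (ha : a ∈ reps c)
    (hb : b ∈ reps c) : a * b ∈ repsPow c 2 :=
  ⟨![a, b], fun k => by fin_cases k <;> simpa, by simp⟩

lemma sq_mul_mem_reps {E : Type*} [Field E] (c : ι → ι → E) {a t : E} (ha : a ∈ reps c)
    (ht : t ≠ 0) : t ^ 2 * a ∈ reps c := by
  obtain ⟨ha, x, hx⟩ := ha
  exact ⟨mul_ne_zero (pow_ne_zero 2 ht) ha, t • x, by rw [eval_smul, hx]⟩

/-- Let `φ`, `ψ` be nondefective quadratic forms over a field `F` of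
characteristic 2 with `dim φ, dim ψ ≥ 2` such that `φ_{F(ψ)}` is isotropic.  If `E/F`
is a field extension such that both `φ_E` and `ψ_E` are anisotropic, then
`D_E^*(ψ)² ⊆ D_E^*(φ)²`. -/
theorem stmt11 {F : Type u} [Field F] [CharP F 2] {ι κ : Type} [Fintype ι] [Fintype κ]
    (c : ι → ι → F) (d : κ → κ → F)
    (hc : IsNondefective c) (hd : IsNondefective d)
    (hdimc : 2 ≤ Fintype.card ι) (hdimd : 2 ≤ Fintype.card κ)
    (hiso : IsotropicOverFunField c d)
    (E : Type u) [Field E] (σ : F →+* E)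
    (hcE : IsAnisotropic (map σ c)) (hdE : IsAnisotropic (map σ d)) :
    repsPow (map σ d) 2 ⊆ repsPow (map σ c) 2 := by
  by_cases hirr : Irreducible (poly d)
  swap
  · obtain ⟨x, hx, hx0⟩ := hiso.2 hirr
    refine absurd ⟨fun i => σ (x i), fun h => hx ?_, ?_⟩ hcE
    · funext i
      exact σ.injective (by simpa using congrFun h i)
    · rw [eval_map_comp, hx0, map_zero]
  have hrep : ∀ α : ι → E, α ≠ 0 → eval (map σ c) α ∈ reps (map σ c) := fun α hα =>
    ⟨fun h => hcE ⟨α, hα, h⟩, α, rfl⟩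
  rintro _ ⟨w, hw, rfl⟩
  rw [Fin.prod_univ_two]
  obtain ⟨ha, u, hu⟩ := hw 0
  obtain ⟨hb, v, hv⟩ := hw 1
  have hu0 : u ≠ 0 := by
    rintro rfl
    exact ha (by rw [← hu]; simp [eval])
  by_cases hli : LinearIndependent E ![u, v]
  · obtain ⟨f, hf, hne⟩ := exists_dvd_of_isotropic c (poly d) (hiso.1 hirr)
    have hpoly : MvPolynomial.map σ (poly d) = poly (map σ d) := by
      simp [poly, map]
    have hC : map (MvPolynomial.map σ) (map (MvPolynomial.C (σ := κ)) c)
        = map MvPolynomial.C (map σ c) := by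
      funext i j; simp [map]
    obtain ⟨α, β, hα, hβ, h⟩ := exists_of_linearIndependent (map σ c) (map σ d) hcE hdE
      (fun i => MvPolynomial.map σ (f i))
      (by rw [← hpoly, ← hC, eval_map_comp]; exact map_dvd _ hf)
      (by
        obtain ⟨i, hi⟩ := hne
        exact ⟨i, fun h => hi (dvd_of_map_dvd σ (by rw [hpoly]; exact h))⟩) u v hli
    rw [hu, hv] at h
    have hβ0 := (hrep β hβ).1
    have hab : w 0 * w 1 = eval (map σ c) α *
        ((w 0 / eval (map σ c) β) ^ 2 * eval (map σ c) β) := by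
      field_simp
      linear_combination -h
    rw [hab]
    exact mul_mem_repsPow _ (hrep α hα) (sq_mul_mem_reps _ (hrep β hβ) (div_ne_zero ha hβ0))
  · -- If `v = s u`, then `d(u) d(v) = t²` with `t = s d(u)`, and `t² = c(α) (t / c(α))² c(α)`.
    obtain ⟨s, hs⟩ : ∃ s : E, s • u = v := by
      rw [LinearIndependent.pair_iff' hu0] at hli
      push Not at hli
      exact hli
    have hvs : w 1 = s ^ 2 * w 0 := by rw [← hv, ← hs, eval_smul, hu]
    have hs0 : s ≠ 0 := by
      rintro rfl
      exact hb (by rw [hvs]; simp)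
    have : Nonempty ι := Fintype.card_pos_iff.mp (by omega)
    have hα : (fun _ => 1 : ι → E) ≠ 0 := fun h => one_ne_zero (congrFun h (Classical.arbitrary ι))
    have hα0 := (hrep _ hα).1
    have hab : w 0 * w 1 = eval (map σ c) (fun _ => 1) *
        ((s * w 0 / eval (map σ c) (fun _ => 1)) ^ 2 * eval (map σ c) (fun _ => 1)) := by
      rw [hvs]
      field_simp
    rw [hab]
    exact mul_mem_repsPow _ (hrep _ hα)
      (sq_mul_mem_reps _ (hrep _ hα) (div_ne_zero (mul_ne_zero hs0 ha) hα0))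

end QF2
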